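/- With a(n) = f_n(A_n) the size of the even set-alternating domain (and a(1) = 1), for every n ≥ 1 the number a(n) is odd if and only if n = 1 or n = 2^t for some integer t ≥ 2. -/

import Mathlib

/-- `σ` is in the set-alternating domain of `A` on alternatives `{1,…,n}`
(alternative `m` is represented by the index `m-1 : Fin n`; `σ x` is the rank
of alternative `x`, smaller rank = better). For every triple `i < j < k`:
if the middle alternative `j` (whose 1-based name is `j+1`) is in `A`, then
`i` is never ranked below both `j` and `k` (1N3); otherwise `k` is never
ranked above both `i` and `j` (3N1). -/
def inSetAltDomain (n : ℕ) (A : Finset ℕ) (σ : Equiv.Perm (Fin n)) : Prop :=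
  ∀ i j k : Fin n, i < j → j < k →
    (((j : ℕ) + 1 ∈ A) → ¬ (σ j < σ i ∧ σ k < σ i)) ∧
    (((j : ℕ) + 1 ∉ A) → ¬ (σ k < σ i ∧ σ k < σ j))

/-- The set-alternating domain `D_n(A)`. -/
def setAltDomain (n : ℕ) (A : Finset ℕ) : Set (Equiv.Perm (Fin n)) :=
  {σ | inSetAltDomain n A σ}

/-- `f_n(A)`, the cardinality of `D_n(A)`. -/
noncomputable def fsize (n : ℕ) (A : Finset ℕ) : ℕ := (setAltDomain n A).ncard

/-- The even set-alternating scheme: even numbers `2 ≤ j ≤ n-2` (`n` even) or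
`2 ≤ j ≤ n-1` (`n` odd). -/
def evenA (n : ℕ) : Finset ℕ :=
  if Even n then (Finset.Icc 2 (n-2)).filter (fun j => Even j)
  else (Finset.Icc 2 (n-1)).filter (fun j => Even j)

/-- `a(n) = f_n(A_n)`, the size of the even set-alternating domain. -/
noncomputable def aseq (n : ℕ) : ℕ := fsize n (evenA n)

open Finset

namespace SetAlt

/-- Domain with the parity scheme (index `j` odd iff name `j+1` even). -/
def Dom {n : ℕ} (σ : Equiv.Perm (Fin n)) : Prop :=
  ∀ i j k : Fin n, i < j → j < k →
    (((j : ℕ) % 2 = 1) → ¬ (σ j < σ i ∧ σ k < σ i)) ∧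
    (((j : ℕ) % 2 ≠ 1) → ¬ (σ k < σ i ∧ σ k < σ j))

/-- Feasibility of inserting a new largest alternative at rank `p`. -/
def OK {n : ℕ} (σ : Equiv.Perm (Fin n)) (p : ℕ) : Prop :=
  ∀ i j : Fin n, i < j →
    (((j : ℕ) % 2 = 1) → ¬ (σ j < σ i ∧ p ≤ (σ i : ℕ))) ∧
    (((j : ℕ) % 2 ≠ 1) → ¬ (p ≤ (σ i : ℕ) ∧ p ≤ (σ j : ℕ)))

lemma inSet_iff {n : ℕ} (σ : Equiv.Perm (Fin n)) :
    inSetAltDomain n (evenA n) σ ↔ Dom σ := by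
  unfold inSetAltDomain Dom
  refine forall_congr' fun i => forall_congr' fun j => forall_congr' fun k =>
    forall_congr' fun hij => forall_congr' fun hjk => ?_
  have : ((j : ℕ) + 1 ∈ evenA n) ↔ (j : ℕ) % 2 = 1 := by
    have h1 : (i : ℕ) < j := hij
    have h2 : (j : ℕ) < k := hjk
    have h3 := k.2
    unfold evenA
    split_ifs with h
    · simp only [mem_filter, mem_Icc, Nat.even_iff] at h ⊢; omega
    · simp only [mem_filter, mem_Icc, Nat.even_iff] at h ⊢; omega
  rw [this]

/-- Insert the new largest alternative at rank `p`. -/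
def ins {n : ℕ} (p : Fin (n + 1)) (σ : Equiv.Perm (Fin n)) : Equiv.Perm (Fin (n + 1)) :=
  (finSuccEquiv' (Fin.last n)).trans ((Equiv.optionCongr σ).trans (finSuccEquiv' p).symm)

@[simp] lemma ins_last {n : ℕ} (p : Fin (n + 1)) (σ : Equiv.Perm (Fin n)) :
    ins p σ (Fin.last n) = p := by
  simp [ins]

@[simp] lemma ins_castSucc {n : ℕ} (p : Fin (n + 1)) (σ : Equiv.Perm (Fin n)) (x : Fin n) :
    ins p σ x.castSucc = p.succAbove (σ x) := by
  have : finSuccEquiv' (Fin.last n) x.castSucc = some x := by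
    rw [← Fin.succAbove_last_apply, finSuccEquiv'_succAbove]
  simp [ins, this]

lemma ins_bij (n : ℕ) :
    Function.Bijective (fun q : Equiv.Perm (Fin n) × Fin (n + 1) => ins q.2 q.1) := by
  rw [Fintype.bijective_iff_injective_and_card]
  constructor
  · rintro ⟨σ, p⟩ ⟨τ, q⟩ h
    simp only at h
    have hp : p = q := by
      have := congrArg (fun e => e (Fin.last n)) h
      simpa using this
    subst hp
    have : σ = τ := by
      ext x
      have := congrArg (fun e => e x.castSucc) h
      simp only [ins_castSucc] at this
      rw [Fin.succAbove_right_injective this]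
    rw [this]
  · simp [Fintype.card_perm, Nat.factorial_succ, mul_comm]

lemma succAbove_val {n : ℕ} (p : Fin (n + 1)) (x : Fin n) :
    ((p.succAbove x : Fin (n + 1)) : ℕ) = if (x : ℕ) < p then (x : ℕ) else x + 1 := by
  unfold Fin.succAbove
  simp only [Fin.lt_def]
  split_ifs <;> simp_all

lemma dom_ins {n : ℕ} (p : Fin (n + 1)) (σ : Equiv.Perm (Fin n)) :
    Dom (ins p σ) ↔ Dom σ ∧ OK σ p := by
  constructor
  · intro h
    constructor
    · intro i j k hij hjk
      have := h i.castSucc j.castSucc k.castSucc (by simpa using hij) (by simpa using hjk)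
      simpa [Fin.succAbove_lt_succAbove_iff] using this
    · intro i j hij
      have := h i.castSucc j.castSucc (Fin.last n) (by simpa using hij) (Fin.castSucc_lt_last j)
      simp only [ins_castSucc, ins_last, Fin.succAbove_lt_succAbove_iff, Fin.val_castSucc] at this
      simp only [Fin.lt_def, succAbove_val] at this ⊢
      constructor
      · intro hj
        have := this.1 hj
        split_ifs at this <;> omega
      · intro hj
        have := this.2 hj
        split_ifs at this <;> omega
  · rintro ⟨h, hO⟩ i j k hij hjk
    obtain ⟨j, rfl⟩ : ∃ j', j = Fin.castSucc j' :=
      ⟨j.castPred (ne_of_lt (lt_of_lt_of_le hjk (Fin.le_last k))), by simp⟩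
    obtain ⟨i, rfl⟩ : ∃ j', i = Fin.castSucc j' :=
      ⟨i.castPred (ne_of_lt (lt_of_lt_of_le hij (Fin.le_last _))), by simp⟩
    have hij' : i < j := by simpa using hij
    rcases Fin.eq_castSucc_or_eq_last k with ⟨k, rfl⟩ | rfl
    · have := h i j k hij' (by simpa using hjk)
      simpa [Fin.succAbove_lt_succAbove_iff] using this
    · have := hO i j hij'
      simp only [ins_castSucc, ins_last, Fin.succAbove_lt_succAbove_iff, Fin.val_castSucc]
      simp only [Fin.lt_def, succAbove_val] at this ⊢
      constructor
      · intro hj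
        have := this.1 hj
        split_ifs <;> omega
      · intro hj
        have := this.2 hj
        split_ifs <;> omega

/-- Least feasible rank. -/
noncomputable def lo {n : ℕ} (σ : Equiv.Perm (Fin n)) : ℕ := sInf {p | OK σ p}

lemma OK_mono {n : ℕ} {σ : Equiv.Perm (Fin n)} {p q : ℕ} (h : OK σ p) (hpq : p ≤ q) : OK σ q := by
  intro i j hij
  have := h i j hij
  exact ⟨fun hj hc => this.1 hj ⟨hc.1, hpq.trans hc.2⟩,
    fun hj hc => this.2 hj ⟨hpq.trans hc.1, hpq.trans hc.2⟩⟩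

lemma OK_top {n : ℕ} (σ : Equiv.Perm (Fin n)) : OK σ n := by
  intro i j hij
  have := (σ i).2
  constructor <;> intro _ hc <;> omega

lemma OK_iff {n : ℕ} (σ : Equiv.Perm (Fin n)) (p : ℕ) : OK σ p ↔ lo σ ≤ p := by
  constructor
  · intro h; exact Nat.sInf_le h
  · intro h
    exact OK_mono (Nat.sInf_mem (s := {p | OK σ p}) ⟨n, OK_top σ⟩) h

lemma lo_le {n : ℕ} (σ : Equiv.Perm (Fin n)) : lo σ ≤ n := (OK_iff σ n).1 (OK_top σ)

lemma lo_eq {n : ℕ} {σ : Equiv.Perm (Fin n)} {b : ℕ} (h : ∀ q, OK σ q ↔ b ≤ q) : lo σ = b := by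
  apply le_antisymm
  · rw [← OK_iff, h]
  · rw [← h, OK_iff]

/-- Feasibility after an insertion. -/
lemma OK_ins {n : ℕ} (p : Fin (n + 1)) (σ : Equiv.Perm (Fin n)) (q : ℕ) :
    OK (ins p σ) q ↔
      (∀ i j : Fin n, i < j →
        (((j : ℕ) % 2 = 1) → ¬ (σ j < σ i ∧ q ≤ (p.succAbove (σ i) : ℕ))) ∧
        (((j : ℕ) % 2 ≠ 1) → ¬ (q ≤ (p.succAbove (σ i) : ℕ) ∧ q ≤ (p.succAbove (σ j) : ℕ)))) ∧
      (∀ i : Fin n, (n % 2 = 1 → ¬ ((p : ℕ) ≤ σ i ∧ q ≤ (σ i : ℕ) + 1)) ∧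
        (n % 2 ≠ 1 → ¬ (q ≤ (p.succAbove (σ i) : ℕ) ∧ q ≤ (p : ℕ)))) := by
  constructor
  · intro h
    constructor
    · intro i j hij
      have := h i.castSucc j.castSucc (by simpa using hij)
      simpa [Fin.succAbove_lt_succAbove_iff] using this
    · intro i
      have := h i.castSucc (Fin.last n) (Fin.castSucc_lt_last i)
      simp only [ins_castSucc, ins_last, Fin.val_last] at this
      refine ⟨fun hn hc => this.1 hn ?_, this.2⟩
      simp only [Fin.lt_def, succAbove_val]
      split_ifs <;> omega
  · rintro ⟨h, hO⟩ i j hij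
    obtain ⟨i, rfl⟩ : ∃ j', i = Fin.castSucc j' :=
      ⟨i.castPred (ne_of_lt (lt_of_lt_of_le hij (Fin.le_last _))), by simp⟩
    rcases Fin.eq_castSucc_or_eq_last j with ⟨j, rfl⟩ | rfl
    · have := h i j (by simpa using hij)
      simpa [Fin.succAbove_lt_succAbove_iff] using this
    · have := hO i
      simp only [ins_castSucc, ins_last, Fin.val_last]
      refine ⟨fun hn hc => this.1 hn ?_, this.2⟩
      simp only [Fin.lt_def, succAbove_val] at hc
      split_ifs at hc <;> omega

lemma exists_rank {n : ℕ} (σ : Equiv.Perm (Fin n)) (r : ℕ) (hr : r < n) :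
    ∃ i, ((σ i : Fin n) : ℕ) = r := ⟨σ.symm ⟨r, hr⟩, by simp⟩

lemma lo_ins_odd_top {n : ℕ} (hn : n % 2 = 1) (p : Fin (n + 1)) (hp : (p : ℕ) = n)
    (σ : Equiv.Perm (Fin n)) : lo (ins p σ) = lo σ := by
  apply lo_eq
  intro q
  rw [← OK_iff, OK_ins]
  have hs : ∀ x, ((p.succAbove (σ x) : Fin (n + 1)) : ℕ) = σ x := by
    intro x; rw [succAbove_val]; have := (σ x).2; split_ifs <;> omega
  simp only [hs]
  constructor
  · exact fun h => h.1
  · refine fun h => ⟨h, fun i => ⟨fun _ hc => ?_, fun h => absurd hn h⟩⟩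
    have := (σ i).2
    omega

lemma lo_ins_odd {n : ℕ} (hn : n % 2 = 1) (p : Fin (n + 1)) (hp : (p : ℕ) < n)
    (σ : Equiv.Perm (Fin n)) : lo (ins p σ) = n + 1 := by
  apply lo_eq
  intro q
  constructor
  · rw [OK_ins]
    rintro ⟨-, h⟩
    obtain ⟨i, hi⟩ := exists_rank σ (n - 1) (by omega)
    have := (h i).1 hn
    omega
  · intro h; exact OK_mono (OK_top _) h

lemma lo_ins_even_top {n : ℕ} (hn : n % 2 ≠ 1) (p : Fin (n + 1)) (hp : (p : ℕ) = n)
    (σ : Equiv.Perm (Fin n)) : lo (ins p σ) = n := by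
  apply lo_eq
  intro q
  have hs : ∀ x, ((p.succAbove (σ x) : Fin (n + 1)) : ℕ) = σ x := by
    intro x; rw [succAbove_val]; have := (σ x).2; split_ifs <;> omega
  rw [OK_ins]
  simp only [hs]
  constructor
  · rintro ⟨-, h⟩
    by_contra hq
    obtain ⟨i, hi⟩ := exists_rank σ (n - 1) (by omega)
    have := (h i).2 hn
    omega
  · intro h
    refine ⟨OK_mono (OK_top σ) h, fun i => ⟨fun h => absurd h hn, fun _ hc => ?_⟩⟩
    have := (σ i).2
    omega

lemma lo_ins_even {n : ℕ} (hn : n % 2 ≠ 1) (p : Fin (n + 1)) (hp : (p : ℕ) < n)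
    (σ : Equiv.Perm (Fin n)) (hO : OK σ p) : lo (ins p σ) = p + 1 := by
  apply lo_eq
  intro q
  rw [OK_ins]
  constructor
  · rintro ⟨-, h⟩
    by_contra hq
    obtain ⟨i, hi⟩ := exists_rank σ (n - 1) (by omega)
    have := (h i).2 hn
    rw [succAbove_val] at this
    split_ifs at this <;> omega
  · intro h
    refine ⟨fun i j hij => ?_, fun i => ⟨fun h => absurd h hn, fun _ hc => by omega⟩⟩
    have := hO i j hij
    simp only [succAbove_val]
    refine ⟨fun hj hc => this.1 hj ⟨hc.1, ?_⟩, fun hj hc => this.2 hj ⟨?_, ?_⟩⟩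
    · have := hc.2; split_ifs at this <;> omega
    · have := hc.1; split_ifs at this <;> omega
    · have := hc.2; split_ifs at this <;> omega

/-- State: length of the maximal feasible suffix. -/
noncomputable def M {n : ℕ} (σ : Equiv.Perm (Fin n)) : ℕ := n - lo σ

/-- New state. -/
def nxt (n m k : ℕ) : ℕ :=
  if n % 2 = 1 then (if k = 0 then m + 1 else 0) else (if k = 0 then 1 else k)

lemma M_ins {n : ℕ} (p : Fin (n + 1)) (σ : Equiv.Perm (Fin n)) (hO : OK σ p) :
    M (ins p σ) = nxt n (M σ) (n - p) := by
  have h1 := lo_le σ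
  have h2 := p.2
  unfold M nxt
  by_cases hn : n % 2 = 1 <;> by_cases hp : (p : ℕ) = n
  · rw [lo_ins_odd_top hn p hp, if_pos hn, if_pos (by omega)]; omega
  · rw [lo_ins_odd hn p (by omega), if_pos hn, if_neg (by omega)]; omega
  · rw [lo_ins_even_top hn p hp, if_neg hn, if_pos (by omega)]; omega
  · rw [lo_ins_even hn p (by omega) σ hO, if_neg hn, if_neg (by omega)]; omega

open Classical in
/-- Weighted count over the domain. -/
noncomputable def wsum (n : ℕ) (φ : ℕ → ℕ) : ℕ :=
  ∑ σ : Equiv.Perm (Fin n), if Dom σ then φ (M σ) else 0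

lemma wsum_succ (n : ℕ) (φ : ℕ → ℕ) :
    wsum (n + 1) φ = wsum n (fun m => ∑ k ∈ range (m + 1), φ (nxt n m k)) := by
  classical
  unfold wsum
  rw [← (ins_bij n).sum_comp (fun τ => if Dom τ then φ (M τ) else 0), Fintype.sum_prod_type]
  refine Finset.sum_congr rfl fun σ _ => ?_
  by_cases hD : Dom σ
  swap
  · simp [dom_ins, hD]
  have hlo := lo_le σ
  have e : ∀ p : Fin (n + 1), (if Dom (ins p σ) then φ (M (ins p σ)) else 0) =
      (fun p : ℕ => if n - p ≤ M σ then φ (nxt n (M σ) (n - p)) else 0) p := by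
    intro p
    have h2 := p.2
    have : OK σ p ↔ n - (p : ℕ) ≤ M σ := by rw [OK_iff]; unfold M; omega
    simp only [dom_ins, hD, true_and]
    by_cases hO : OK σ p
    · rw [if_pos hO, if_pos (this.1 hO), M_ins p σ hO]
    · rw [if_neg hO, if_neg (fun h => hO (this.2 h))]
  simp only [e, if_pos hD]
  rw [Fin.sum_univ_eq_sum_range
    (fun p : ℕ => if n - p ≤ M σ then φ (nxt n (M σ) (n - p)) else 0)]
  have := Finset.sum_range_reflect (fun k => if k ≤ M σ then φ (nxt n (M σ) k) else 0) (n + 1)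
  simp only [Nat.add_sub_cancel] at this
  rw [this, ← Finset.sum_filter]
  refine Finset.sum_congr ?_ fun _ _ => rfl
  ext k
  have : M σ ≤ n := by unfold M; omega
  simp only [mem_filter, mem_range]; omega

lemma aseq_eq (n : ℕ) : aseq n = wsum n (fun _ => 1) := by
  classical
  unfold aseq fsize setAltDomain wsum
  rw [← Finset.sum_filter, Finset.sum_const, smul_eq_mul, mul_one, ← Set.ncard_coe_finset]
  congr 1
  ext σ
  simp [inSet_iff]

lemma wsum_even (r : ℕ) (φ : ℕ → ℕ) :
    wsum (2 * r + 1) φ = wsum (2 * r) (fun m => φ 1 + ∑ k ∈ range m, φ (k + 1)) := by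
  rw [wsum_succ]
  congr 1
  funext m
  rw [Finset.sum_range_succ', add_comm]
  simp [nxt]

lemma wsum_odd (r : ℕ) (φ : ℕ → ℕ) :
    wsum (2 * r + 2) φ = wsum (2 * r + 1) (fun m => φ (m + 1) + m * φ 0) := by
  rw [wsum_succ]
  congr 1
  funext m
  have : (2 * r + 1) % 2 = 1 := by omega
  rw [Finset.sum_range_succ', add_comm]
  simp [nxt, this]

lemma wsum_two (r : ℕ) (φ : ℕ → ℕ) :
    wsum (2 * (r + 1) + 1) φ =
      wsum (2 * r + 1) (fun m => (m + 1) * φ 1 + ∑ k ∈ range (m + 1), φ (k + 1)) := by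
  rw [wsum_even, show 2 * (r + 1) = 2 * r + 2 by ring, wsum_odd]
  congr 1
  funext m
  simp only [range_zero, sum_empty]
  ring

lemma wsum_one (φ : ℕ → ℕ) : wsum 1 φ = φ 1 := by
  have := wsum_even 0 φ
  rw [show 2 * 0 + 1 = 1 from rfl] at this
  rw [this]
  have hD : ∀ σ : Equiv.Perm (Fin (2 * 0)), Dom σ := fun σ i => absurd i.2 (by omega)
  have hM : ∀ σ : Equiv.Perm (Fin (2 * 0)), M σ = 0 := fun σ => by simp [M]
  simp [wsum, hD, hM]

/-- Descendant counts. -/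
def g : ℕ → ℕ → ℕ
  | 0, m => m + 1
  | r + 1, m => (m + 1) * g r 1 + ∑ k ∈ range (m + 1), g r (k + 1)

lemma wsum_g (s r : ℕ) : wsum (2 * s + 1) (g r) = g (r + s) 1 := by
  induction s generalizing r with
  | zero => rw [show 2 * 0 + 1 = 1 from rfl, wsum_one]; rfl
  | succ s ih =>
    rw [wsum_two, show r + (s + 1) = (r + 1) + s by ring, ← ih]
    rfl

lemma aseq_even (r : ℕ) : aseq (2 * r + 2) = g r 1 := by
  have := wsum_g r 0
  rw [zero_add] at this
  rw [aseq_eq, wsum_odd, ← this]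
  congr 1
  funext m
  simp [g]; ring

lemma wsum_mul (n c : ℕ) (φ : ℕ → ℕ) : wsum n (fun m => c * φ m) = c * wsum n φ := by
  simp [wsum, Finset.mul_sum]

lemma aseq_odd (r : ℕ) : Even (aseq (2 * r + 3)) := by
  rw [aseq_eq, show 2 * r + 3 = 2 * (r + 1) + 1 by ring, wsum_two]
  have : (fun m : ℕ => (m + 1) * 1 + ∑ k ∈ range (m + 1), 1) = fun m => 2 * (m + 1) := by
    funext m; simp; ring
  rw [this, wsum_mul]
  exact even_two_mul _

/-! ### Power series over `ZMod 2` -/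

open PowerSeries

open Classical in
/-- The mod 2 Catalan series. -/
noncomputable def C2 : PowerSeries (ZMod 2) :=
  PowerSeries.mk fun k => if ∃ t : ℕ, k + 1 = 2 ^ t then 1 else 0

lemma coeff_sq (f : PowerSeries (ZMod 2)) (n : ℕ) :
    coeff n (f ^ 2) = if n % 2 = 0 then coeff (n / 2) f else 0 := by
  have h : f ^ 2 = expand 2 two_ne_zero f := by
    have := MvPowerSeries.map_frobenius_expand (σ := Unit) (R := ZMod 2) 2 two_ne_zero (f := f)
    rw [ZMod.frobenius_zmod] at this
    simpa [expand] using this.symm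
  rw [h, coeff_expand]
  simp only [Nat.dvd_iff_mod_eq_zero]

lemma C2_eq : C2 = 1 + X * C2 ^ 2 := by
  ext n
  cases n with
  | zero =>
    simp only [C2, coeff_mk, map_add, coeff_zero_X_mul, add_zero, coeff_zero_one]
    rw [if_pos ⟨0, by simp⟩]
  | succ n =>
    rw [map_add, coeff_succ_X_mul, coeff_sq, coeff_one, if_neg (by omega), zero_add]
    simp only [C2, coeff_mk]
    split_ifs with h1 h2 h3 h4 h5
    · rfl
    · exfalso
      obtain ⟨t, ht⟩ := h1
      cases t with
      | zero => simp at ht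
      | succ t => exact h3 ⟨t, by rw [pow_succ] at ht; omega⟩
    · exfalso
      obtain ⟨t, ht⟩ := h1
      cases t with
      | zero => simp at ht
      | succ t => rw [pow_succ] at ht; omega
    · exfalso
      obtain ⟨t, ht⟩ := h5
      exact h1 ⟨t + 1, by rw [pow_succ]; omega⟩
    · rfl
    · rfl

/-- The generating series. -/
noncomputable def W (m : ℕ) : PowerSeries (ZMod 2) := C2 ^ m + 1 + X ^ 2 * C2 ^ 2

lemma two_zero : (2 : PowerSeries (ZMod 2)) = 0 := by
  have : (2 : PowerSeries (ZMod 2)) = C (2 : ZMod 2) := (map_ofNat C 2).symm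
  rw [this, show (2 : ZMod 2) = 0 from rfl, map_zero]

lemma W_zero : W 0 = X * (X * C2 ^ 2) := by
  unfold W
  linear_combination two_zero

lemma W_step (m : ℕ) : W (m + 1) = W m + X * (W (m + 2) + W 0 + 1) := by
  unfold W
  linear_combination C2 ^ m * C2_eq - (2 * X + X ^ 3 * C2 ^ 2) * two_zero

lemma W_zero' : W 0 = X * (W 0 + W 1) := by
  unfold W
  linear_combination - X * C2_eq + (1 - 2 * X - X ^ 3 * C2 ^ 2) * two_zero

lemma g_coeff (r m : ℕ) : ((g r (m + 1) : ℕ) : ZMod 2) = coeff (r + 1) (W m) := by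
  induction r generalizing m with
  | zero =>
    have h2 : (2 : ZMod 2) = 0 := rfl
    induction m with
    | zero =>
      rw [W_zero, coeff_succ_X_mul, coeff_zero_X_mul]
      rfl
    | succ m ih =>
      rw [W_step, map_add, ← ih, coeff_succ_X_mul]
      have c0 : constantCoeff C2 = 1 := by
        rw [C2_eq]; simp
      simp [g, W, c0]
      linear_combination 2 * h2
  | succ r ih =>
    have h2 : (2 : ZMod 2) = 0 := rfl
    induction m with
    | zero =>
      rw [W_zero', coeff_succ_X_mul, map_add, ← ih, ← ih]
      simp only [g, Finset.sum_range_succ, Finset.sum_range_zero]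
      push_cast
      linear_combination (g r 1 : ZMod 2) * h2
    | succ m ihm =>
      rw [W_step, map_add, ← ihm, coeff_succ_X_mul, map_add, map_add, ← ih, ← ih,
        coeff_one, if_neg (by omega), add_zero]
      simp only [g]
      rw [Finset.sum_range_succ _ (m + 1 + 1)]
      push_cast
      ring

end SetAlt

/-- for `n ≥ 1`, `a(n)` is odd iff `n = 1` or `n = 2^t` with
`t ≥ 2`. -/
theorem stmt18 (n : ℕ) (hn : 1 ≤ n) :
    Odd (aseq n) ↔ (n = 1 ∨ ∃ t : ℕ, 2 ≤ t ∧ n = 2 ^ t) := by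
  open SetAlt in
  rcases Nat.even_or_odd' n with ⟨r, rfl | rfl⟩
  · obtain ⟨r, rfl⟩ : ∃ s, r = s + 1 := ⟨r - 1, by omega⟩
    rw [show 2 * (r + 1) = 2 * r + 2 by ring, aseq_even, ← ZMod.natCast_eq_one_iff_odd,
      show (1 : ℕ) = 0 + 1 from rfl, g_coeff, W_zero, PowerSeries.coeff_succ_X_mul]
    cases r with
    | zero =>
      simp only [PowerSeries.coeff_zero_X_mul]
      constructor
      · intro h; exact absurd h (by decide)
      · rintro (h | ⟨t, ht, h⟩)
        · omega
        · have : 2 ^ 2 ≤ 2 ^ t := Nat.pow_le_pow_right (by omega) ht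
          omega
    | succ r =>
      rw [PowerSeries.coeff_succ_X_mul, coeff_sq]
      simp only [C2, PowerSeries.coeff_mk]
      constructor
      · intro h
        split_ifs at h with h1 h2
        · obtain ⟨t, ht⟩ := h2
          exact Or.inr ⟨t + 2, by omega, by rw [pow_add]; omega⟩
        · exact absurd h (by decide)
        · exact absurd h (by decide)
      · rintro (h | ⟨t, ht, h⟩)
        · omega
        · obtain ⟨s, rfl⟩ : ∃ s, t = s + 2 := ⟨t - 2, by omega⟩
          rw [pow_add] at h
          rw [if_pos (by omega), if_pos ⟨s, by omega⟩]
  · cases r with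
    | zero =>
      simp [aseq_eq, wsum_one]
    | succ r =>
      rw [← Nat.not_even_iff_odd]
      constructor
      · intro h
        exact absurd (aseq_odd r) h
      · rintro (h | ⟨t, ht, h⟩)
        · omega
        · obtain ⟨s, rfl⟩ : ∃ s, t = s + 1 := ⟨t - 1, by omega⟩
          rw [pow_succ] at h
          omega
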